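/- Let S be a Γ-semiring with a left unity and a right unity, and let L be its left operator semiring. The map I ↦ I⁺' is an inclusion-preserving bijection from the set of ideals of S onto the set of ideals of L, with inverse J ↦ J⁺; hence the lattices of ideals of S and of L are isomorphic. -/

import Mathlib

/-!
Every `f ∈ L` is additive, commutes with right multiplication, `f (s γ a) = (f s) γ a`, and
preserves ideals of `S`. The second property says `f ∘ ℓ(s,γ) = ℓ(f s, γ)`, which links the two
sides of the correspondence: `f ∈ (J⁺)⁺'` if and only if `f ∘ ℓ(s,γ) ∈ J` for all `s`, `γ`.

The unities supply the two nontrivial inclusions. If `a γ s ∈ I` for all `γ`, `s`, then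
`a = ∑ⱼ a γⱼ fⱼ ∈ I` by the right unity, so `(I⁺')⁺ ⊆ I`. If `f ∘ ℓ(s,γ) ∈ J` for all `s`, `γ`,
then `f = ∑ᵢ f ∘ ℓ(eᵢ,δᵢ) ∈ J` by the left unity, so `(J⁺)⁺' ⊆ J`. Both maps are monotone and
`⁺` is a left inverse of `⁺'`, so `⁺'` also reflects inclusions.
-/

instance : Fact ((0:ℝ) ≤ 1) := ⟨zero_le_one⟩

/-- A `Γ`-semiring structure on additive commutative monoids `S` and `Γ`. -/
structure GammaSemiring (S Γ : Type*) [AddCommMonoid S] [AddCommMonoid Γ] where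
  tmul : S → Γ → S → S
  add_left : ∀ (a b : S) (α : Γ) (c : S), tmul (a + b) α c = tmul a α c + tmul b α c
  add_right : ∀ (a : S) (α : Γ) (b c : S), tmul a α (b + c) = tmul a α b + tmul a α c
  add_mid : ∀ (a : S) (α β : Γ) (b : S), tmul a (α + β) b = tmul a α b + tmul a β b
  tmul_assoc : ∀ (a : S) (α : Γ) (b : S) (β : Γ) (c : S),
    tmul a α (tmul b β c) = tmul (tmul a α b) β c
  zero_left : ∀ (α : Γ) (x : S), tmul 0 α x = 0
  zero_right : ∀ (x : S) (α : Γ), tmul x α 0 = 0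
  zero_mid : ∀ (x y : S), tmul x 0 y = 0

namespace GammaSemiring

variable {S Γ : Type*} [AddCommMonoid S] [AddCommMonoid Γ]

/-- The left translation map `ℓ(x,α) : a ↦ xαa`. -/
def ell (G : GammaSemiring S Γ) (x : S) (α : Γ) : S → S := fun a => G.tmul x α a

/-- Membership in the left operator semiring: the additive closure of the maps `ℓ(x,α)`. -/
inductive InL (G : GammaSemiring S Γ) : (S → S) → Prop
  | basic (x : S) (α : Γ) : InL G (G.ell x α)
  | add {f g : S → S} : InL G f → InL G g → InL G (f + g)

lemma inL_zero (G : GammaSemiring S Γ) : G.InL (0 : S → S) := by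
  have h : G.ell (0 : S) (0 : Γ) = (0 : S → S) := funext fun a => G.zero_left 0 a
  exact h ▸ InL.basic 0 0

lemma InL.comp {G : GammaSemiring S Γ} {f g : S → S} (hf : G.InL f) (hg : G.InL g) :
    G.InL (f ∘ g) := by
  induction hf with
  | basic x α =>
    induction hg with
    | basic y β =>
      have h : G.ell x α ∘ G.ell y β = G.ell (G.tmul x α y) β :=
        funext fun a => G.tmul_assoc x α y β a
      exact h ▸ InL.basic _ _
    | add hg₁ hg₂ ih₁ ih₂ =>
      rename_i g₁ g₂
      have h : G.ell x α ∘ (g₁ + g₂) = (G.ell x α ∘ g₁) + (G.ell x α ∘ g₂) :=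
        funext fun a => G.add_right x α (g₁ a) (g₂ a)
      exact h ▸ InL.add ih₁ ih₂
  | add hf₁ hf₂ ih₁ ih₂ =>
    rename_i f₁ f₂
    have h : (f₁ + f₂) ∘ g = (f₁ ∘ g) + (f₂ ∘ g) := rfl
    exact h ▸ InL.add ih₁ ih₂

/-- The left operator semiring `L` of a `Γ`-semiring, as a type: the subtype of
maps `S → S` belonging to the additive closure of the `ℓ(x,α)`. -/
def LOp (G : GammaSemiring S Γ) : Type _ := {f : S → S // G.InL f}

/-- The zero element of `L` is the zero map. -/
instance (G : GammaSemiring S Γ) : Zero G.LOp := ⟨⟨0, G.inL_zero⟩⟩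

/-- Addition in `L` is pointwise addition of maps. -/
instance (G : GammaSemiring S Γ) : Add G.LOp := ⟨fun f g => ⟨f.1 + g.1, f.2.add g.2⟩⟩

/-- Multiplication in `L` is composition of maps. -/
instance (G : GammaSemiring S Γ) : Mul G.LOp := ⟨fun f g => ⟨f.1 ∘ g.1, f.2.comp g.2⟩⟩

/-- `S` has a left unity `∑ᵢ [eᵢ, δᵢ]`, i.e. `∑ᵢ eᵢ δᵢ a = a` for all `a ∈ S`. -/
def HasLeftUnity (G : GammaSemiring S Γ) : Prop :=
  ∃ (n : ℕ) (e : Fin n → S) (δ : Fin n → Γ), ∀ a : S, ∑ i, G.tmul (e i) (δ i) a = a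

/-- `S` has a right unity `∑ⱼ [γⱼ, fⱼ]`, i.e. `∑ⱼ a γⱼ fⱼ = a` for all `a ∈ S`. -/
def HasRightUnity (G : GammaSemiring S Γ) : Prop :=
  ∃ (n : ℕ) (γ : Fin n → Γ) (f : Fin n → S), ∀ a : S, ∑ j, G.tmul a (γ j) (f j) = a

/-- A fuzzy ideal of the `Γ`-semiring `S`: a `[0,1]`-valued function with
`σ(0) = 1`, `σ(x+y) ≥ min(σ(x),σ(y))` and `σ(xγy) ≥ max(σ(x),σ(y))`. -/
def IsFuzzyIdeal (G : GammaSemiring S Γ) (sigma : S → unitInterval) : Prop :=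
  sigma 0 = 1 ∧ (∀ x y : S, min (sigma x) (sigma y) ≤ sigma (x + y)) ∧
    ∀ (x : S) (γ : Γ) (y : S), max (sigma x) (sigma y) ≤ sigma (G.tmul x γ y)

/-- A fuzzy ideal of the left operator semiring `L`. -/
def IsFuzzyIdealL (G : GammaSemiring S Γ) (mu : G.LOp → unitInterval) : Prop :=
  mu 0 = 1 ∧ (∀ f g : G.LOp, min (mu f) (mu g) ≤ mu (f + g)) ∧
    ∀ f g : G.LOp, max (mu f) (mu g) ≤ mu (f * g)

/-- A fuzzy subset is non-constant if it takes at least two distinct values. -/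
def NonConstant {X : Type*} (mu : X → unitInterval) : Prop := ∃ a b : X, mu a ≠ mu b

/-- `μ⁺(x) = inf_{γ ∈ Γ} μ(ℓ(x,γ))` for a fuzzy subset `μ` of `L`. -/
noncomputable def plus (G : GammaSemiring S Γ) (mu : G.LOp → unitInterval) :
    S → unitInterval :=
  fun x => ⨅ γ : Γ, mu ⟨G.ell x γ, InL.basic x γ⟩

/-- `σ⁺'(f) = inf_{s ∈ S} σ(f(s))` for a fuzzy subset `σ` of `S`. -/
noncomputable def plusPrime (G : GammaSemiring S Γ) (sigma : S → unitInterval) :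
    G.LOp → unitInterval :=
  fun f => ⨅ s : S, sigma (f.1 s)

/-- The sum `μ₁ ⊕ μ₂` of two fuzzy subsets:
`(μ₁ ⊕ μ₂)(x) = sup { min(μ₁(u), μ₂(v)) : u + v = x }`. -/
noncomputable def fuzzySum {X : Type*} [Add X] (mu₁ mu₂ : X → unitInterval) :
    X → unitInterval :=
  fun x => sSup {r : unitInterval | ∃ u v : X, u + v = x ∧ r = min (mu₁ u) (mu₂ v)}

end GammaSemiring
namespace GammaSemiring

variable {S Γ : Type*} [AddCommMonoid S] [AddCommMonoid Γ]

/-- An ideal of the `Γ`-semiring `S`: a nonempty subset closed under addition and under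
multiplication by elements of `S` on either side. -/
def IsIdeal (G : GammaSemiring S Γ) (A : Set S) : Prop :=
  A.Nonempty ∧ (∀ a ∈ A, ∀ b ∈ A, a + b ∈ A) ∧
    ∀ a ∈ A, ∀ (x : S) (γ : Γ), G.tmul x γ a ∈ A ∧ G.tmul a γ x ∈ A

/-- An ideal of the left operator semiring `L`. -/
def IsIdealL (G : GammaSemiring S Γ) (J : Set G.LOp) : Prop :=
  J.Nonempty ∧ (∀ f ∈ J, ∀ g ∈ J, f + g ∈ J) ∧
    ∀ f ∈ J, ∀ g : G.LOp, f * g ∈ J ∧ g * f ∈ J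

/-- `I⁺' = { f ∈ L : f(s) ∈ I for all s ∈ S }` for a subset `I` of `S`. -/
def idealPlusPrime (G : GammaSemiring S Γ) (A : Set S) : Set G.LOp :=
  {f : G.LOp | ∀ s : S, f.1 s ∈ A}

/-- `J⁺ = { a ∈ S : ℓ(a,γ) ∈ J for all γ ∈ Γ }` for a subset `J` of `L`. -/
def idealPlus (G : GammaSemiring S Γ) (J : Set G.LOp) : Set S :=
  {a : S | ∀ γ : Γ, (⟨G.ell a γ, InL.basic a γ⟩ : G.LOp) ∈ J}

/-- `S` is zero-divisor free: `aαb = 0` implies `a = 0` or `α = 0` or `b = 0`. -/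
def ZDF (G : GammaSemiring S Γ) : Prop :=
  ∀ (a : S) (α : Γ) (b : S), G.tmul a α b = 0 → a = 0 ∨ α = 0 ∨ b = 0

/-- `S` is a commutative `Γ`-semiring: `aαb = bαa`. -/
def IsCommutative (G : GammaSemiring S Γ) : Prop :=
  ∀ (a : S) (α : Γ) (b : S), G.tmul a α b = G.tmul b α a

/-- A commutative `Γ`-semiring `S` is a `Γ`-semifield if for all `a ≠ 0` and `α ≠ 0` there
are `b ∈ S`, `β ∈ Γ` with `aαbβd = d` for all `d ∈ S`. -/
def IsGammaSemifield (G : GammaSemiring S Γ) : Prop :=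
  G.IsCommutative ∧ ∀ a : S, a ≠ 0 → ∀ α : Γ, α ≠ 0 →
    ∃ (b : S) (β : Γ), ∀ d : S, G.tmul (G.tmul a α b) β d = d

/-- The `Γₙ`-semiring product on `n × n` matrices:
`(A Δ B) i j = ∑ t ∑ k, (A i t) (Δ t k) (B k j)`. -/
def matTmul (G : GammaSemiring S Γ) {n : ℕ} (A : Matrix (Fin n) (Fin n) S)
    (D : Matrix (Fin n) (Fin n) Γ) (B : Matrix (Fin n) (Fin n) S) :
    Matrix (Fin n) (Fin n) S :=
  Matrix.of fun i j => ∑ t, ∑ k, G.tmul (A i t) (D t k) (B k j)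

/-- A fuzzy ideal of the matrix `Γₙ`-semiring `Sₙ`, defined in the same way as for `S`,
with `Sₙ`, `Γₙ` in place of `S`, `Γ`. -/
def IsFuzzyIdealMatrix (G : GammaSemiring S Γ) {n : ℕ}
    (mu : Matrix (Fin n) (Fin n) S → unitInterval) : Prop :=
  mu 0 = 1 ∧ (∀ A B : Matrix (Fin n) (Fin n) S, min (mu A) (mu B) ≤ mu (A + B)) ∧
    ∀ (A : Matrix (Fin n) (Fin n) S) (D : Matrix (Fin n) (Fin n) Γ)
      (B : Matrix (Fin n) (Fin n) S), max (mu A) (mu B) ≤ mu (G.matTmul A D B)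

end GammaSemiring

open Classical in
/-- The characteristic function of a subset, as a fuzzy subset. -/
noncomputable def fuzzyIndicator {X : Type*} (A : Set X) : X → unitInterval :=
  fun x => if x ∈ A then 1 else 0

/-- `μₙ`, the fuzzy subset of `Sₙ` induced by a fuzzy subset `μ` of `S`:
`μₙ(A) = min { μ(Aᵢⱼ) : 1 ≤ i,j ≤ n }`. -/
noncomputable def matFuzzy {S : Type*} {n : ℕ} (mu : S → unitInterval) :
    Matrix (Fin n) (Fin n) S → unitInterval :=
  fun A => ⨅ i, ⨅ j, mu (A i j)


namespace GammaSemiring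

section IdealCorrespondence

variable {S Γ : Type*} [AddCommMonoid S] [AddCommMonoid Γ] {G : GammaSemiring S Γ}

lemma InL.map_zero {f : S → S} (hf : G.InL f) : f 0 = 0 := by
  induction hf with
  | basic x α => exact G.zero_right x α
  | add _ _ ih₁ ih₂ => simp [ih₁, ih₂]

lemma InL.map_add {f : S → S} (hf : G.InL f) (a b : S) : f (a + b) = f a + f b := by
  induction hf with
  | basic x α => exact G.add_right x α a b
  | add _ _ ih₁ ih₂ => simp only [Pi.add_apply, ih₁, ih₂]; exact add_add_add_comm _ _ _ _

lemma InL.map_sum {f : S → S} (hf : G.InL f) {ι : Type*} (s : Finset ι) (g : ι → S) :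
    f (∑ i ∈ s, g i) = ∑ i ∈ s, f (g i) :=
  _root_.map_sum (AddMonoidHom.mk ⟨f, hf.map_zero⟩ hf.map_add) g s

/-- Elements of `L` commute with right multiplication by elements of `S`. -/
lemma InL.map_tmul {f : S → S} (hf : G.InL f) (s : S) (γ : Γ) (a : S) :
    f (G.tmul s γ a) = G.tmul (f s) γ a := by
  induction hf with
  | basic x α => exact G.tmul_assoc x α s γ a
  | add _ _ ih₁ ih₂ => simp only [Pi.add_apply, ih₁, ih₂, G.add_left]

lemma IsIdeal.zero_mem {A : Set S} (hA : G.IsIdeal A) : (0 : S) ∈ A := by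
  obtain ⟨⟨a, ha⟩, -, hmul⟩ := hA
  simpa [G.zero_left] using (hmul a ha 0 0).1

lemma IsIdeal.sum_mem {A : Set S} (hA : G.IsIdeal A) {ι : Type*} (s : Finset ι) (g : ι → S)
    (hg : ∀ i ∈ s, g i ∈ A) : ∑ i ∈ s, g i ∈ A :=
  Finset.sum_induction g (· ∈ A) (fun a b ha hb => hA.2.1 a ha b hb) hA.zero_mem hg

lemma IsIdeal.map_mem {A : Set S} (hA : G.IsIdeal A) {f : S → S} (hf : G.InL f)
    {a : S} (ha : a ∈ A) : f a ∈ A := by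
  induction hf with
  | basic x α => exact (hA.2.2 a ha x α).1
  | add _ _ ih₁ ih₂ => exact hA.2.1 _ ih₁ _ ih₂

lemma IsIdealL.zero_mem {J : Set G.LOp} (hJ : G.IsIdealL J) : (0 : G.LOp) ∈ J := by
  obtain ⟨⟨f, hf⟩, -, hmul⟩ := hJ
  have h : (0 : G.LOp) * f = 0 := rfl
  exact h ▸ (hmul f hf 0).2

/-- An ideal of `L` is closed under finite sums, these being computed among maps `S → S`. -/
lemma IsIdealL.exists_sum_mem {J : Set G.LOp} (hJ : G.IsIdealL J) {ι : Type*} (s : Finset ι)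
    (g : ι → G.LOp) (hg : ∀ i, g i ∈ J) : ∃ h ∈ J, ∀ a : S, h.1 a = ∑ i ∈ s, (g i).1 a := by
  classical
  induction s using Finset.induction_on with
  | empty => exact ⟨0, hJ.zero_mem, fun a => by rw [Finset.sum_empty]; rfl⟩
  | insert i s hi ih =>
    obtain ⟨h, hh, hsum⟩ := ih
    refine ⟨g i + h, hJ.2.1 _ (hg i) _ hh, fun a => ?_⟩
    rw [Finset.sum_insert hi, ← hsum]
    rfl

lemma IsIdeal.idealPlusPrime {A : Set S} (hA : G.IsIdeal A) :
    G.IsIdealL (G.idealPlusPrime A) :=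
  ⟨⟨0, fun _ => hA.zero_mem⟩, fun _ hf _ hg s => hA.2.1 _ (hf s) _ (hg s),
    fun _ hf g => ⟨fun s => hf (g.1 s), fun s => hA.map_mem g.2 (hf s)⟩⟩

lemma LOp.mem_of_forall_eq {J : Set G.LOp} {f g : G.LOp} (hg : g ∈ J)
    (h : ∀ s, f.1 s = g.1 s) : f ∈ J := by
  rwa [show f = g from Subtype.ext (funext h)]

lemma IsIdealL.idealPlus {J : Set G.LOp} (hJ : G.IsIdealL J) : G.IsIdeal (G.idealPlus J) := by
  refine ⟨⟨0, fun γ => ?_⟩, fun a ha b hb γ => ?_, fun a ha x γ => ⟨fun β => ?_, fun β => ?_⟩⟩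
  · exact LOp.mem_of_forall_eq hJ.zero_mem fun s => G.zero_left γ s
  · exact LOp.mem_of_forall_eq (hJ.2.1 _ (ha γ) _ (hb γ)) fun s => G.add_left a b γ s
  · exact LOp.mem_of_forall_eq (hJ.2.2 _ (ha β) ⟨G.ell x γ, InL.basic x γ⟩).2
      fun s => (G.tmul_assoc x γ a β s).symm
  · exact LOp.mem_of_forall_eq (hJ.2.2 _ (ha γ) ⟨G.ell x β, InL.basic x β⟩).1
      fun s => (G.tmul_assoc a γ x β s).symm

lemma IsIdeal.idealPlus_idealPlusPrime (hRU : G.HasRightUnity) {A : Set S}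
    (hA : G.IsIdeal A) : G.idealPlus (G.idealPlusPrime A) = A := by
  ext a
  refine ⟨fun h => ?_, fun ha γ s => (hA.2.2 a ha s γ).2⟩
  obtain ⟨n, γ, f, hf⟩ := hRU
  rw [← hf a]
  exact hA.sum_mem _ _ fun j _ => h (γ j) (f j)

lemma IsIdealL.idealPlusPrime_idealPlus (hLU : G.HasLeftUnity) {J : Set G.LOp}
    (hJ : G.IsIdealL J) : G.idealPlusPrime (G.idealPlus J) = J := by
  ext f
  have key (s : S) (γ : Γ) : (⟨G.ell (f.1 s) γ, InL.basic _ γ⟩ : G.LOp) =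
      f * ⟨G.ell s γ, InL.basic s γ⟩ :=
    Subtype.ext (funext fun a => (f.2.map_tmul s γ a).symm)
  constructor
  · intro h
    obtain ⟨n, e, δ, he⟩ := hLU
    obtain ⟨g, hg, hsum⟩ := hJ.exists_sum_mem Finset.univ
      (fun i => f * ⟨G.ell (e i) (δ i), InL.basic _ _⟩) fun i => key (e i) (δ i) ▸ h (e i) (δ i)
    have hfg : g = f := Subtype.ext (funext fun a => by
      rw [hsum a]
      conv_rhs => rw [← he a, f.2.map_sum]
      rfl)
    exact hfg ▸ hg
  · intro hf s γ
    rw [key]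
    exact (hJ.2.2 f hf _).1

end IdealCorrespondence

end GammaSemiring

variable {S Γ : Type*} [AddCommMonoid S] [AddCommMonoid Γ]

/-- `I ↦ I⁺'` is an inclusion-preserving bijection from the set of ideals
of `S` onto the set of ideals of `L`, with inverse `J ↦ J⁺`; hence the lattices of ideals
of `S` and of `L` are isomorphic. -/
theorem ideal_lattice_iso (G : GammaSemiring S Γ)
    (hLU : G.HasLeftUnity) (hRU : G.HasRightUnity) :
    (∀ A : Set S, G.IsIdeal A → G.IsIdealL (G.idealPlusPrime A)) ∧
    (∀ J : Set G.LOp, G.IsIdealL J → G.IsIdeal (G.idealPlus J)) ∧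
    (∀ A : Set S, G.IsIdeal A → G.idealPlus (G.idealPlusPrime A) = A) ∧
    (∀ J : Set G.LOp, G.IsIdealL J → G.idealPlusPrime (G.idealPlus J) = J) ∧
    (∀ A B : Set S, G.IsIdeal A → G.IsIdeal B →
      (A ⊆ B ↔ G.idealPlusPrime A ⊆ G.idealPlusPrime B)) := by
  refine ⟨fun A hA => hA.idealPlusPrime, fun J hJ => hJ.idealPlus,
    fun A hA => hA.idealPlus_idealPlusPrime hRU, fun J hJ => hJ.idealPlusPrime_idealPlus hLU,
    fun A B hA hB => ⟨fun h f hf s => h (hf s), fun h => ?_⟩⟩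
  rw [← hA.idealPlus_idealPlusPrime hRU, ← hB.idealPlus_idealPlusPrime hRU]
  exact fun a ha γ => h (ha γ)
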